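/- Let N ⊆ H be a closed subspace and x ∈ Ω, and define the matrix B(x) ∈ ℝ^{m×m} by B(x)_{ij} := ⟨K(x,e_i) − Π_N K(x,e_i), K(x,e_j) − Π_N K(x,e_j)⟩_H, where e_1,…,e_m is the standard basis of ℝ^m. Then for every f ∈ H, the 1-norm of the pointwise interpolation error satisfies ‖Φ(f)(x) − Φ(Π_N f)(x)‖_1 ≤ √m · ‖B(x)‖_2^{1/2} · ‖f − Π_N f‖, where ‖B(x)‖_2 is the spectral norm (operator 2-norm) of B(x). -/

import Mathlib

open Matrix BigOperators
open scoped RealInnerProductSpace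

/-- The spectral norm (operator 2-norm) of a square real matrix, i.e. the operator norm
of the induced map on Euclidean space. -/
noncomputable def matrixSpectralNorm {m : ℕ} (B : Matrix (Fin m) (Fin m) ℝ) : ℝ :=
  ‖Matrix.toEuclideanCLM (𝕜 := ℝ) B‖

/-!
By the reproducing property and orthogonality, the components of the error at `x` are the inner
products of `f - Π_N f` with the residuals `K(x, eᵢ) - Π_N K(x, eᵢ)`, and `B(x)` is the Gram matrix
of these residuals. For a finite family `v` with Gram matrix `G`, the synthesis map `c ↦ ∑ cᵢ vᵢ`
satisfies `‖∑ cᵢ vᵢ‖² = ⟪c, G c⟫ ≤ ‖G‖ ‖c‖²`, so by duality the analysis map `g ↦ (⟪vᵢ, g⟫)ᵢ` is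
bounded by `‖G‖^{1/2}` in the Euclidean norm. Passing to the 1-norm costs the factor `√m`.
-/

section

open WithLp
open scoped InnerProductSpace Matrix.Norms.L2Operator

theorem sum_norm_le_sqrt_card_mul_norm {ι : Type*} [Fintype ι] {β : ι → Type*}
    [∀ i, SeminormedAddCommGroup (β i)] (c : PiLp 2 β) :
    ∑ i, ‖c i‖ ≤ √(Fintype.card ι) * ‖c‖ := by
  rw [PiLp.norm_eq_of_L2, ← Real.sqrt_mul (Nat.cast_nonneg _)]
  exact Real.le_sqrt_of_sq_le sq_sum_le_card_mul_sum_sq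

variable {𝕜 ι E : Type*} [RCLike 𝕜]

section Gram

variable [Fintype ι] [DecidableEq ι] [SeminormedAddCommGroup E] [InnerProductSpace 𝕜 E]

theorem norm_sum_smul_sq_le_norm_gram_mul (v : ι → E) (c : EuclideanSpace 𝕜 ι) :
    ‖∑ i, c i • v i‖ ^ 2 ≤ ‖gram 𝕜 v‖ * ‖c‖ ^ 2 := by
  have quadratic_form : ⟪∑ i, c i • v i, ∑ i, c i • v i⟫_𝕜 = ⟪c, toLp 2 (gram 𝕜 v *ᵥ c)⟫_𝕜 := by
    rw [← star_dotProduct_gram_mulVec, EuclideanSpace.inner_eq_star_dotProduct, dotProduct_comm]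
  calc ‖∑ i, c i • v i‖ ^ 2
      = RCLike.re ⟪c, toLp 2 (gram 𝕜 v *ᵥ c)⟫_𝕜 := by
        rw [← quadratic_form, ← norm_sq_eq_re_inner]
    _ ≤ ‖c‖ * ‖toLp 2 (gram 𝕜 v *ᵥ c)‖ := re_inner_le_norm _ _
    _ ≤ ‖c‖ * (‖gram 𝕜 v‖ * ‖c‖) := by gcongr; exact l2_opNorm_mulVec _ c
    _ = ‖gram 𝕜 v‖ * ‖c‖ ^ 2 := by ring

theorem norm_toLp_inner_le_sqrt_norm_gram_mul (v : ι → E) (g : E) :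
    ‖toLp 2 fun i ↦ ⟪v i, g⟫_𝕜‖ ≤ √‖gram 𝕜 v‖ * ‖g‖ := by
  set a : EuclideanSpace 𝕜 ι := toLp 2 fun i ↦ ⟪v i, g⟫_𝕜
  have synthesis_le : ‖∑ i, a i • v i‖ ≤ √‖gram 𝕜 v‖ * ‖a‖ := by
    rw [← Real.sqrt_sq (norm_nonneg a), ← Real.sqrt_mul (norm_nonneg _)]
    exact Real.le_sqrt_of_sq_le (norm_sum_smul_sq_le_norm_gram_mul v a)
  have duality : ⟪a, a⟫_𝕜 = ⟪∑ i, a i • v i, g⟫_𝕜 := by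
    simp only [sum_inner, inner_smul_left, PiLp.inner_apply, RCLike.inner_apply', a]
  have norm_mul_self_le : ‖a‖ * ‖a‖ ≤ √‖gram 𝕜 v‖ * ‖g‖ * ‖a‖ :=
    calc ‖a‖ * ‖a‖ = RCLike.re ⟪∑ i, a i • v i, g⟫_𝕜 := by
          rw [← duality, inner_self_eq_norm_mul_norm]
      _ ≤ ‖∑ i, a i • v i‖ * ‖g‖ := re_inner_le_norm _ _
      _ ≤ √‖gram 𝕜 v‖ * ‖a‖ * ‖g‖ := by gcongr
      _ = √‖gram 𝕜 v‖ * ‖g‖ * ‖a‖ := by ring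
  rcases (norm_nonneg a).eq_or_lt with zero_eq_norm | norm_pos
  · rw [← zero_eq_norm]; positivity
  · exact le_of_mul_le_mul_right norm_mul_self_le norm_pos

theorem sum_norm_inner_le_sqrt_card_mul_sqrt_norm_gram_mul (v : ι → E) (g : E) :
    ∑ i, ‖⟪v i, g⟫_𝕜‖ ≤ √(Fintype.card ι) * √‖gram 𝕜 v‖ * ‖g‖ :=
  calc ∑ i, ‖⟪v i, g⟫_𝕜‖
      ≤ √(Fintype.card ι) * ‖toLp 2 fun i ↦ ⟪v i, g⟫_𝕜‖ :=
        sum_norm_le_sqrt_card_mul_norm (toLp 2 fun i ↦ ⟪v i, g⟫_𝕜)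
    _ ≤ √(Fintype.card ι) * (√‖gram 𝕜 v‖ * ‖g‖) := by
        gcongr; exact norm_toLp_inner_le_sqrt_norm_gram_mul v g
    _ = √(Fintype.card ι) * √‖gram 𝕜 v‖ * ‖g‖ := (mul_assoc _ _ _).symm

end Gram

variable [NormedAddCommGroup E] [InnerProductSpace 𝕜 E]

theorem inner_sub_starProjection_sub_starProjection (N : Submodule 𝕜 E)
    [N.HasOrthogonalProjection] (u f : E) :
    ⟪u - N.starProjection u, f - N.starProjection f⟫_𝕜 = ⟪u, f - N.starProjection f⟫_𝕜 := by
  rw [inner_sub_left, N.sub_starProjection_mem_orthogonal f _ (N.starProjection_apply_mem u),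
    sub_zero]

/-- Here `K x i` is the representer of the `i`-th component of evaluation at `x`, that is,
`K(x, eᵢ)`. -/
theorem oneNorm_interpolation_error_bound_general [Fintype ι] [DecidableEq ι] {Ω : Type*}
    (Φ : E → Ω → ι → 𝕜) (K : Ω → ι → E) (hrep : ∀ f x i, ⟪K x i, f⟫_𝕜 = Φ f x i)
    (N : Submodule 𝕜 E) [N.HasOrthogonalProjection] (x : Ω) (f : E) :
    ∑ i, ‖Φ f x i - Φ (N.starProjection f) x i‖ ≤
      √(Fintype.card ι) * √‖gram 𝕜 fun i ↦ K x i - N.starProjection (K x i)‖ *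
        ‖f - N.starProjection f‖ := by
  have error_eq_inner (i : ι) : Φ f x i - Φ (N.starProjection f) x i =
      ⟪K x i - N.starProjection (K x i), f - N.starProjection f⟫_𝕜 := by
    rw [inner_sub_starProjection_sub_starProjection, inner_sub_right, hrep, hrep]
  simp only [error_eq_inner]
  exact sum_norm_inner_le_sqrt_card_mul_sqrt_norm_gram_mul _ _

end

/-- One-norm interpolation error bound:
`‖Φ(f)(x) − Φ(Π_N f)(x)‖₁ ≤ √m · ‖B(x)‖₂^{1/2} · ‖f − Π_N f‖` where
`B(x)_{ij} = ⟪K(x,eᵢ) − Π_N K(x,eᵢ), K(x,eⱼ) − Π_N K(x,eⱼ)⟫`. -/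
theorem oneNorm_interpolation_error_bound {Ω : Type*} {m : ℕ} {H : Type*}
    [NormedAddCommGroup H] [InnerProductSpace ℝ H]
    (k : Ω → Ω → Matrix (Fin m) (Fin m) ℝ)
    (hker : ∀ x y, k x y = (k y x)ᵀ)
    (Φ : H →ₗ[ℝ] Ω → Fin m → ℝ) (K : Ω → (Fin m → ℝ) → H)
    (hΦK : ∀ (x : Ω) (α : Fin m → ℝ) (y : Ω), Φ (K x α) y = (k y x).mulVec α)
    (hrep : ∀ (f : H) (x : Ω) (α : Fin m → ℝ), ⟪f, K x α⟫ = Φ f x ⬝ᵥ α)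
    (N : Submodule ℝ H) (hclosed : IsClosed (N : Set H)) [Submodule.HasOrthogonalProjection N]
    (x : Ω)
    (B : Matrix (Fin m) (Fin m) ℝ)
    (hB : ∀ i j, B i j =
      ⟪K x (Pi.single i 1) - Submodule.orthogonalProjection N (K x (Pi.single i 1)),
       K x (Pi.single j 1) - Submodule.orthogonalProjection N (K x (Pi.single j 1))⟫) :
    ∀ f : H,
      ∑ i, |Φ f x i - Φ (Submodule.orthogonalProjection N f) x i|
        ≤ Real.sqrt m * Real.sqrt (matrixSpectralNorm B) * ‖f - Submodule.orthogonalProjection N f‖ := by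
  intro f
  have representer (f : H) (y : Ω) (i : Fin m) : ⟪K y (Pi.single i 1), f⟫ = Φ f y i := by
    rw [real_inner_comm, hrep, dotProduct_single_one]
  obtain rfl : B = gram ℝ fun i ↦
      K x (Pi.single i 1) - N.starProjection (K x (Pi.single i 1)) := Matrix.ext hB
  have bound :=
    oneNorm_interpolation_error_bound_general Φ (fun y i ↦ K y (Pi.single i 1)) representer N x f
  rwa [Fintype.card_fin] at bound
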